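/- Let d ≥ 2 be an integer such that d+1 is a prime. Let G be a finite d-degenerate graph with a list assignment L such that |L(v)| ≥ d+1 for all vertices v. Then every request r for G and L with |dom(r)| = 1 is 1-satisfiable; that is, for every vertex u ∈ V(G) and every color c ∈ L(u), there exists an L-coloring φ of G with φ(u) = c. -/

import Mathlib

def IsLColoring {V : Type*} (G : SimpleGraph V) (L : V → Finset ℕ) (φ : V → ℕ) : Prop :=
  (∀ v, φ v ∈ L v) ∧ ∀ ⦃u w : V⦄, G.Adj u w → φ u ≠ φ w

/-- `G` is `d`-degenerate: every subgraph of `G` (with at least one vertex)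
has a vertex of degree at most `d`. -/
def Degenerate {V : Type*} (G : SimpleGraph V) (d : ℕ) : Prop :=
  ∀ H : G.Subgraph, H.verts.Nonempty → ∃ v ∈ H.verts, (H.neighborSet v).ncard ≤ d

open MvPolynomial in
/-- The graph polynomial attached to a finite set of ordered pairs. -/
noncomputable def gpoly {V : Type*} (R : Type*) [CommRing R] (E : Finset (V × V)) :
    MvPolynomial V R := ∏ e ∈ E, (X e.1 - X e.2)

open MvPolynomial in
lemma gpoly_top {V : Type*} [Finite V] [LinearOrder V] (R : Type*) [CommRing R] [IsDomain R]
    (E : Finset (V × V)) (hE : ∀ e ∈ E, e.1 < e.2) :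
    (∑ e ∈ E, Finsupp.single e.1 1 : V →₀ ℕ) ∈ (gpoly R E).support := by
  have hlt : ∀ e ∈ E, MonomialOrder.lex.toSyn (MonomialOrder.lex.degree (X e.2 : MvPolynomial V R)) <
      MonomialOrder.lex.toSyn (MonomialOrder.lex.degree (X e.1 : MvPolynomial V R)) := by
    intro e he
    rw [MonomialOrder.degree_X, MonomialOrder.degree_X, MonomialOrder.lex_lt_iff]
    exact Finsupp.Lex.single_lt_iff.2 (hE e he)
  have hd : ∀ e ∈ E, MonomialOrder.lex.degree (X e.1 - X e.2 : MvPolynomial V R)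
      = Finsupp.single e.1 1 := by
    intro e he
    rw [MonomialOrder.degree_sub_of_lt (hlt e he), MonomialOrder.degree_X]
  rw [← Finset.sum_congr rfl hd, mem_support_iff, gpoly, MonomialOrder.coeff_prod_sum_degree]
  refine Finset.prod_ne_zero_iff.2 fun e he => ?_
  rw [MonomialOrder.leadingCoeff_ne_zero_iff]
  intro h0
  have := hd e he
  rw [h0, MonomialOrder.degree_zero] at this
  have := DFunLike.congr_fun this e.1
  simp at this

open MvPolynomial in
lemma gpoly_exists {V : Type*} [Finite V] [LinearOrder V] (p : ℕ) [Fact p.Prime]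
    (E : Finset (V × V)) (hE : ∀ e ∈ E, e.1 < e.2)
    (hdeg : ∀ v, (E.filter (fun e => e.1 = v)).card < p) (u : V) :
    ∃ t : V →₀ ℕ, coeff t (gpoly (ZMod p) E) ≠ 0 ∧ t u = 0 ∧ ∀ v, t v < p := by
  by_contra! hcon
  let S : Set (V →₀ ℕ) := insert (Finsupp.single u 1) (Set.range fun v => Finsupp.single v p)
  let T : Set (V →₀ ℕ) := Set.range fun v => Finsupp.single v p
  have hmem : gpoly (ZMod p) E ∈
      Ideal.span ((fun s => monomial s (1 : ZMod p)) '' S) := by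
    rw [mem_ideal_span_monomial_image]
    intro t ht
    rw [mem_support_iff] at ht
    by_cases h0 : t u = 0
    · obtain ⟨v, hv⟩ := hcon t ht h0
      exact ⟨_, Or.inr ⟨v, rfl⟩, Finsupp.single_le_iff.2 hv⟩
    · exact ⟨_, Or.inl rfl, Finsupp.single_le_iff.2 (by omega)⟩
  let σ : MvPolynomial V (ZMod p) →ₐ[ZMod p] MvPolynomial V (ZMod p) :=
    aeval fun v => X v - X u
  have hσ : σ (gpoly (ZMod p) E) = gpoly (ZMod p) E := by
    simp [σ, gpoly, map_prod]
  have hle : Ideal.span ((fun s => monomial s (1 : ZMod p)) '' S) ≤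
      (Ideal.span ((fun s => monomial s (1 : ZMod p)) '' T)).comap σ := by
    rw [Ideal.span_le]
    have hX : ∀ v, (X v : MvPolynomial V (ZMod p)) ^ p ∈
        Ideal.span ((fun s => monomial s (1 : ZMod p)) '' T) := by
      intro v
      apply Ideal.subset_span
      exact ⟨_, ⟨v, rfl⟩, by simp [X_pow_eq_monomial]⟩
    rintro _ ⟨s, hs | ⟨v, rfl⟩, rfl⟩
    · subst hs
      have : σ (monomial (Finsupp.single u 1) (1 : ZMod p)) = 0 := by
        change σ (X u) = 0
        simp [σ]
      simp only [SetLike.mem_coe, Ideal.mem_comap]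
      rw [this]
      exact Ideal.zero_mem _
    · have : σ (monomial (Finsupp.single v p) (1 : ZMod p)) = X v ^ p - X u ^ p := by
        rw [← X_pow_eq_monomial, map_pow, ← sub_pow_char]
        simp [σ]
      simp only [SetLike.mem_coe, Ideal.mem_comap]
      rw [this]
      exact Ideal.sub_mem _ (hX v) (hX u)
  have h2 := hle hmem
  rw [Ideal.mem_comap, hσ, mem_ideal_span_monomial_image] at h2
  obtain ⟨_, ⟨v, rfl⟩, hv⟩ := h2 _ (gpoly_top (ZMod p) E hE)
  rw [Finsupp.single_le_iff, Finsupp.finsetSum_apply] at hv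
  have := hdeg v
  simp only [Finsupp.single_apply, Finset.sum_boole, Nat.cast_id] at hv
  omega

lemma degen_order {V : Type*} [Fintype V] (d : ℕ) (G : SimpleGraph V) (hdeg : Degenerate G d)
    (n : ℕ) : ∀ S : Set V, S.ncard = n → ∃ f : V → ℕ, Set.InjOn f S ∧
      ∀ a ∈ S, {b | b ∈ S ∧ G.Adj a b ∧ f a < f b}.ncard ≤ d := by
  classical
  induction n with
  | zero =>
    intro S hS
    rw [Set.ncard_eq_zero] at hS
    subst hS
    exact ⟨fun _ => 0, by simp, by simp⟩
  | succ n ih =>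
    intro S hS
    have hne : S.Nonempty := by
      rw [← Set.ncard_pos]; omega
    obtain ⟨v, hv, hvd⟩ := hdeg ((⊤ : G.Subgraph).induce S) (by simpa using hne)
    have hvS : v ∈ S := by simpa using hv
    obtain ⟨f, hf, hfd⟩ := ih (S \ {v}) (by
      rw [Set.ncard_sdiff_singleton_of_mem hvS]; omega)
    refine ⟨fun b => if b = v then 0 else f b + 1, ?_, ?_⟩
    · intro a ha b hb hab
      by_cases h1 : a = v <;> by_cases h2 : b = v <;> simp [h1, h2] at hab ⊢
      exact hf ⟨ha, h1⟩ ⟨hb, h2⟩ hab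
    · intro a ha
      by_cases h1 : a = v
      · subst h1
        refine le_trans (Set.ncard_le_ncard ?_ (Set.toFinite _)) hvd
        rintro b ⟨hb, hab, -⟩
        simp [SimpleGraph.Subgraph.mem_neighborSet, ha, hb, hab]
      · refine le_trans (Set.ncard_le_ncard ?_ (Set.toFinite _)) (hfd a ⟨ha, h1⟩)
        rintro b ⟨hb, hab, hlt⟩
        by_cases h2 : b = v
        · simp [h2] at hlt
        · simp [h1, h2] at hlt
          exact ⟨⟨hb, h2⟩, hab, hlt⟩

theorem stmt5 {V : Type*} [Fintype V] (d : ℕ) (hd : 2 ≤ d) (hp : Nat.Prime (d + 1))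
    (G : SimpleGraph V) (hdeg : Degenerate G d) (L : V → Finset ℕ)
    (hL : ∀ v, d + 1 ≤ (L v).card) (u : V) (c : ℕ) (hc : c ∈ L u) :
    ∃ φ : V → ℕ, IsLColoring G L φ ∧ φ u = c := by
  classical
  obtain ⟨f, hf, hfd⟩ := degen_order d G hdeg _ Set.univ rfl
  letI : LinearOrder V := LinearOrder.lift' f (Set.injOn_univ.1 hf)
  have hltf : ∀ a b : V, a < b ↔ f a < f b := fun a b => Iff.rfl
  haveI : Fact (Nat.Prime (d + 1)) := ⟨hp⟩
  let E : Finset (V × V) := Finset.univ.filter fun e => G.Adj e.1 e.2 ∧ e.1 < e.2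
  obtain ⟨t, ht, htu, htv⟩ := gpoly_exists (d + 1) E (by simp [E]) (by
    intro v
    refine Nat.lt_succ_of_le (le_trans ?_ (hfd v (Set.mem_univ v)))
    rw [← Set.ncard_coe_finset]
    refine Set.ncard_le_ncard_of_injOn Prod.snd ?_ ?_ (Set.toFinite _)
    · rintro ⟨a, b⟩ h
      simp [E] at h
      obtain ⟨⟨h1, h2⟩, rfl⟩ := h
      exact ⟨Set.mem_univ _, h1, h2⟩
    · rintro ⟨a, b⟩ h ⟨a', b'⟩ h' hb
      simp [E] at h h' hb
      simp [h.2, h'.2, hb]) u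
  have hmap : MvPolynomial.map (Int.castRingHom (ZMod (d + 1))) (gpoly ℤ E)
      = gpoly (ZMod (d + 1)) E := by
    simp [gpoly, map_prod]
  have htZ : MvPolynomial.coeff t (gpoly ℤ E) ≠ 0 := by
    intro h0
    apply ht
    rw [← hmap, MvPolynomial.coeff_map, h0, map_zero]
  have hhom : (gpoly ℤ E).IsHomogeneous (∑ e ∈ E, 1) :=
    MvPolynomial.IsHomogeneous.prod _ _ _ fun e _ =>
      (MvPolynomial.isHomogeneous_X _ _).sub (MvPolynomial.isHomogeneous_X _ _)
  have hne : gpoly ℤ E ≠ 0 := by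
    intro h0
    rw [h0] at htZ
    simp at htZ
  have htd : (gpoly ℤ E).totalDegree = t.degree := by
    rw [hhom.totalDegree hne]
    by_contra h
    exact htZ (hhom.coeff_eq_zero (Ne.symm h))
  let L' : V → Finset ℕ := fun v => if v = u then {c} else L v
  obtain ⟨s, hs, hsne⟩ := MvPolynomial.combinatorial_nullstellensatz_exists_eval_nonzero
    (gpoly ℤ E) t htZ htd (fun v => (L' v).map Nat.castEmbedding) (by
      intro v
      rw [Finset.card_map]
      by_cases h : v = u
      · simp [L', h, htu]
      · simp only [L', h, if_false]
        exact lt_of_lt_of_le (htv v) (hL v))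
  have hs' : ∀ v, ∃ k ∈ L' v, (k : ℤ) = s v := by
    intro v
    simpa using hs v
  choose φ hφ hφs using hs'
  have hφu : φ u = c := by simpa [L'] using hφ u
  refine ⟨φ, ⟨?_, ?_⟩, hφu⟩
  · intro v
    by_cases h : v = u
    · subst h; rw [hφu]; exact hc
    · simpa [L', h] using hφ v
  · have key : ∀ a b : V, G.Adj a b → a < b → φ a ≠ φ b := by
      intro a b hab hlt heq
      apply hsne
      rw [gpoly, map_prod]
      refine Finset.prod_eq_zero (i := (a, b)) (by simp [E, hab, hlt]) ?_
      simp [← hφs, heq]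
    intro a b hab
    rcases lt_trichotomy a b with h | h | h
    · exact key a b hab h
    · exact absurd h hab.ne
    · exact (key b a hab.symm h).symm
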